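/- Fix r > 0. For every x ∈ ℝ and y ∈ (0, r), the family indexed by k ∈ ℤ with terms sin(πy/r) / ( 2r·( cosh(π(x + 2πk)/r) − cos(πy/r) ) ) is absolutely summable. -/

import Mathlib

/-!
With `t = π (x + 2πk) / r`, the inequality `1 + t² / 2 ≤ cosh t` bounds the denominator
`2r (cosh t - cos (πy/r))` below by `r t²`, a constant multiple of `|k + x / (2π)|²`. The numerator is
at most `1`, so away from the at most one `k` with `t = 0` the terms are dominated by those of the
shifted series `∑ 1 / |k + x / (2π)|²`.
-/

open Real

lemma one_add_sq_half_le_cosh (t : ℝ) : 1 + t ^ 2 / 2 ≤ Real.cosh t := by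
  have h1 : Real.cosh t = 1 + 2 * Real.sinh (t / 2) ^ 2 := by
    have h := Real.cosh_two_mul (t / 2)
    rw [Real.cosh_sq, mul_div_cancel₀ t two_ne_zero] at h
    linarith
  have h2 : |t / 2| ≤ |Real.sinh (t / 2)| := by
    rw [Real.abs_sinh]
    exact Real.self_le_sinh_iff.mpr (abs_nonneg _)
  have h3 := sq_le_sq.mpr h2
  rw [h1]
  linarith

theorem periodized_strip_poisson_kernel_summable
    (r : ℝ) (hr : 0 < r) (x : ℝ) (y : ℝ) (hy : y ∈ Set.Ioo 0 r) :
    Summable fun k : ℤ =>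
      |Real.sin (π * y / r) /
        (2 * r * (Real.cosh (π * (x + 2 * π * (k : ℝ)) / r) - Real.cos (π * y / r)))| := by
  have hs := ((Real.summable_one_div_int_add_rpow (x / (2 * π)) 2).mpr one_lt_two).mul_left
    (1 / (r * (2 * π ^ 2 / r) ^ 2))
  refine Summable.of_norm_bounded_eventually hs ?_
  -- At `k + x / (2π) = 0` the majorant takes the junk value `1 / 0 = 0`, so that index is excluded.
  have hfin : {k : ℤ | (k : ℝ) + x / (2 * π) = 0}.Finite := by
    refine Set.Subsingleton.finite fun a ha b hb => ?_
    simp only [Set.mem_ofPred_eq] at ha hb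
    exact_mod_cast (by linarith : (a : ℝ) = b)
  filter_upwards [hfin.compl_mem_cofinite] with k hk
  have hk' : (k : ℝ) + x / (2 * π) ≠ 0 := hk
  have ht : π * (x + 2 * π * (k : ℝ)) / r = 2 * π ^ 2 / r * (k + x / (2 * π)) := by
    field_simp
    ring
  rw [ht, Real.rpow_two, sq_abs, Real.norm_eq_abs, abs_abs, abs_div, one_div_mul_one_div]
  have hpos : 0 < r * (2 * π ^ 2 / r) ^ 2 * ((k : ℝ) + x / (2 * π)) ^ 2 := by positivity
  have hcosh := one_add_sq_half_le_cosh (2 * π ^ 2 / r * (k + x / (2 * π)))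
  have hcos := Real.cos_le_one (π * y / r)
  refine div_le_div₀ zero_le_one (Real.abs_sin_le_one _) hpos (le_trans ?_ (le_abs_self _))
  calc r * (2 * π ^ 2 / r) ^ 2 * ((k : ℝ) + x / (2 * π)) ^ 2
      = 2 * r * ((2 * π ^ 2 / r * (k + x / (2 * π))) ^ 2 / 2) := by ring
    _ ≤ _ := by
      gcongr
      linarith
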